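/- Singular Gronwall lemma: let a, b ≥ 0, α ∈ [0,1), T > 0, and let φ : (0,T] → [0,∞) be continuous and bounded on compact subsets with φ(t) ≤ a t^{-1/2} + b ∫₀ᵗ (t-s)^{-α} φ(s) ds for all t ∈ (0,T]. Then there exists a constant C = C(b, α, T) such that φ(t) ≤ C a t^{-1/2} for all t ∈ (0,T]. -/

import Mathlib

/-!
Only integrability of the kernel times `φ` is known near `0`, so no supremum of `t ^ (1/2) * φ t`
is finite a priori. The `L¹` norm, however, is: `t ^ (-α) ≤ (t - s) ^ (-α)` for `0 < s < t`.

`singular_gronwall_L1` first bounds `∫₀ᵗ φ`. Multiplying the inequality by `exp (-l r)` and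
integrating over `(0, t]`, the memory term becomes a convolution with `exp (-l u) * u ^ (-α)`, whose
mass `Γ(1-α) * l ^ (α-1)` is small for large `l` (`kernel_lintegral_small`), so it is absorbed into
the left-hand side. This leaves `∫₀ᵗ φ ≤ K a t ^ (1/2)`, with the right power of `t` because
`∫₀ᵗ s ^ (-1/2) ds = 2 t ^ (1/2)`.

To pass to a pointwise bound at a fixed `t`, maximise `(s - t/2) * φ s` over `[t/2, t]`. The maximum
`M` is finite by continuity, and since the weight vanishes at `t/2`, no bound on `φ` to the left of
`t/2` is needed for the near part below. At the
maximiser `τ`, with `d = τ - t/2`, `integral_split_le` cuts the memory integral at `τ - θ d`: the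
far part is controlled by the `L¹` bound, while the near part is at most `M / 2` for small `θ`
(chosen uniformly in `t`) and is absorbed. The resulting bound `M ≤ C a t ^ (1/2)`, read off at
`s = t`, is the claim.
-/

open MeasureTheory Set

/-- The integral of a convolution is the product of the integrals. -/
lemma lintegral_convolution_kernel {k g : ℝ → ENNReal} (hk : Measurable k)
    (hg : AEMeasurable g volume) :
    ∫⁻ r, ∫⁻ s, k (r - s) * g s = (∫⁻ u, k u) * ∫⁻ s, g s := by
  rw [lintegral_lintegral_swap]
  · rw [← lintegral_const_mul'' _ hg]
    refine lintegral_congr fun s => ?_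
    rw [lintegral_mul_const _ (by fun_prop), lintegral_sub_right_eq_self k s]
  · apply AEMeasurable.mul
    · exact (hk.comp (measurable_fst.sub measurable_snd)).aemeasurable
    · exact hg.comp_snd

/-- The exponentially damped kernel `u ^ (-α) * exp (-l u)` has small mass for large `l`: its
integral is `Γ(1-α) * l ^ (α-1)`. -/
lemma kernel_lintegral_small {α b : ℝ} (hα1 : α < 1) (hb : 0 ≤ b) :
    ∃ l : ℝ, 0 < l ∧
      ENNReal.ofReal b * ∫⁻ u, (Ioi (0:ℝ)).indicator
        (fun u => ENNReal.ofReal (u ^ (-α) * Real.exp (-(l * u)))) u ≤ ENNReal.ofReal (1/2) := by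
  have hβ : 0 < 1 - α := by linarith
  have hG : 0 < Real.Gamma (1 - α) := Real.Gamma_pos_of_pos hβ
  have hB : 0 < 2 * b * Real.Gamma (1 - α) + 1 := by positivity
  -- with this `l`, `l ^ (α - 1)` is the inverse of `2 * b * Γ(1-α) + 1`
  refine ⟨(2 * b * Real.Gamma (1 - α) + 1) ^ (1 - α)⁻¹, by positivity, ?_⟩
  set B := 2 * b * Real.Gamma (1 - α) + 1 with hBdef
  have hl : 0 < B ^ (1 - α)⁻¹ := by positivity
  have h := Real.integral_rpow_mul_exp_neg_mul_Ioi hβ hl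
  have hi : IntegrableOn (fun u : ℝ => u ^ (-α) * Real.exp (-(B ^ (1 - α)⁻¹ * u))) (Ioi 0) := by
    have := integrableOn_rpow_mul_exp_neg_mul_rpow (s := -α) (p := 1) (by linarith) one_pos hl
    simpa [neg_mul] using this
  rw [lintegral_indicator measurableSet_Ioi, ← ofReal_integral_eq_lintegral_ofReal hi,
    ← ENNReal.ofReal_mul hb]
  · apply ENNReal.ofReal_le_ofReal
    rw [show 1 - α - 1 = -α by ring] at h
    rw [h, one_div, Real.inv_rpow hl.le, ← Real.rpow_mul hB.le, inv_mul_cancel₀ hβ.ne',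
      Real.rpow_one]
    rw [inv_mul_eq_div, mul_div_assoc', div_le_div_iff₀ hB (by norm_num)]
    linarith
  · filter_upwards [ae_restrict_mem measurableSet_Ioi] with u hu
    have : (0:ℝ) < u := hu
    simp only [Pi.zero_apply]
    positivity

/-- `φ` is itself integrable up to `0`, since the kernel is bounded below by `t ^ (-α)`. -/
lemma integrableOn_of_kernel {α t : ℝ} {φ : ℝ → ℝ} (hα0 : 0 ≤ α) (ht : 0 < t)
    (hc : ContinuousOn φ (Ioc 0 t)) (h0 : ∀ s ∈ Ioc 0 t, 0 ≤ φ s)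
    (hi : IntegrableOn (fun s => (t - s) ^ (-α) * φ s) (Ioc 0 t) volume) :
    IntegrableOn φ (Ioc 0 t) volume := by
  -- at `s = t` the junk value `0 ^ (-α) = 0` (for `α ≠ 0`) breaks the lower bound on the kernel
  rw [integrableOn_Ioc_iff_integrableOn_Ioo] at hi ⊢
  refine (hi.const_mul (t ^ α)).mono'
    ((hc.mono Ioo_subset_Ioc_self).aestronglyMeasurable measurableSet_Ioo) ?_
  filter_upwards [ae_restrict_mem measurableSet_Ioo] with s hs
  have hp := h0 s (Ioo_subset_Ioc_self hs)
  rw [Real.norm_of_nonneg hp, ← mul_assoc]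
  apply le_mul_of_one_le_left hp
  have h1 : t ^ (-α) ≤ (t - s) ^ (-α) :=
    Real.rpow_le_rpow_of_nonpos (by linarith [hs.2]) (by linarith [hs.1]) (by linarith)
  calc (1:ℝ) = t ^ α * t ^ (-α) := by rw [← Real.rpow_add ht]; simp
    _ ≤ _ := by gcongr

lemma integrableOn_sing {t : ℝ} (ht : 0 < t) :
    IntegrableOn (fun s : ℝ => s ^ (-(1:ℝ)/2)) (Ioc 0 t) volume := by
  rw [← intervalIntegrable_iff_integrableOn_Ioc_of_le ht.le]
  exact intervalIntegral.intervalIntegrable_rpow' (by norm_num)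

lemma integral_sing {t : ℝ} (ht : 0 < t) :
    ∫ s in Ioc 0 t, s ^ (-(1:ℝ)/2) = 2 * t ^ ((1:ℝ)/2) := by
  rw [← intervalIntegral.integral_of_le ht.le, integral_rpow (by left; norm_num)]
  rw [show -(1:ℝ)/2 + 1 = 1/2 by norm_num, Real.zero_rpow (by norm_num)]
  ring

/-- The integrated form of the inequality, by a Laplace-transform argument: the weight
`exp (-l s)` makes the memory term absorbable. -/
lemma singular_gronwall_L1 (α T : ℝ) (hα0 : 0 ≤ α) (hα1 : α < 1) (b : ℝ) (hb : 0 ≤ b) :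
    ∃ K : ℝ, 0 < K ∧ ∀ (a : ℝ) (φ : ℝ → ℝ), 0 ≤ a →
      ContinuousOn φ (Ioc 0 T) →
      (∀ t ∈ Ioc 0 T, 0 ≤ φ t) →
      (∀ t ∈ Ioc 0 T,
        IntegrableOn (fun s => (t - s) ^ (-α) * φ s) (Ioc 0 t) volume) →
      (∀ t ∈ Ioc 0 T,
        φ t ≤ a * t ^ (-(1:ℝ)/2) + b * ∫ s in Ioc 0 t, (t - s) ^ (-α) * φ s) →
      ∀ t ∈ Ioc 0 T, ∫ s in Ioc 0 t, φ s ≤ K * a * t ^ ((1:ℝ)/2) := by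
  obtain ⟨l, hl, hlb⟩ := kernel_lintegral_small hα1 hb
  refine ⟨4 * Real.exp (l * T), by positivity, fun a φ ha hc h0 hi hφ t ht => ?_⟩
  have hsub : Ioc 0 t ⊆ Ioc 0 T := Ioc_subset_Ioc_right ht.2
  have hint : IntegrableOn φ (Ioc 0 t) volume :=
    integrableOn_of_kernel hα0 ht.1 (hc.mono hsub) (fun s hs => h0 s (hsub hs)) (hi t ht)
  set k : ℝ → ENNReal := (Ioi (0:ℝ)).indicator
        (fun u => ENNReal.ofReal (u ^ (-α) * Real.exp (-(l * u)))) with hk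
  set g : ℝ → ENNReal := (Ioc 0 t).indicator
        (fun s => ENNReal.ofReal (Real.exp (-(l * s)) * φ s)) with hg
  have hkm : Measurable k := by
    apply Measurable.indicator _ measurableSet_Ioi
    fun_prop
  have hgi : IntegrableOn (fun s => Real.exp (-(l * s)) * φ s) (Ioc 0 t) volume := by
    refine hint.mono' ((by fun_prop : Continuous fun s : ℝ => Real.exp (-(l * s))
      ).aestronglyMeasurable.mul hint.aestronglyMeasurable) ?_
    filter_upwards [ae_restrict_mem measurableSet_Ioc] with s hs
    have hp := h0 s (hsub hs)
    rw [Real.norm_of_nonneg (by positivity)]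
    refine mul_le_of_le_one_left hp (Real.exp_le_one_iff.2 ?_)
    have := mul_pos hl hs.1
    linarith
  have hgn : 0 ≤ᵐ[volume.restrict (Ioc 0 t)] fun s => Real.exp (-(l * s)) * φ s := by
    filter_upwards [ae_restrict_mem measurableSet_Ioc] with s hs
    have hp := h0 s (hsub hs)
    simp only [Pi.zero_apply]
    positivity
  have hgm : AEMeasurable g volume := by
    rw [hg, aemeasurable_indicator_iff measurableSet_Ioc]
    exact hgi.aemeasurable.ennreal_ofReal
  have hgint : ∫⁻ s, g s = ENNReal.ofReal (∫ s in Ioc 0 t, Real.exp (-(l * s)) * φ s) := by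
    rw [hg, lintegral_indicator measurableSet_Ioc, ofReal_integral_eq_lintegral_ofReal hgi hgn]
  -- the inequality for `φ`, multiplied by `exp (-l r)`, in convolution form
  have key : ∀ r, g r ≤ (Ioc 0 t).indicator (fun r => ENNReal.ofReal (a * r ^ (-(1:ℝ)/2))) r
      + ENNReal.ofReal b * ∫⁻ s, k (r - s) * g s := by
    intro r
    by_cases hr : r ∈ Ioc 0 t
    swap
    · simp [hg, hr]
    have hrT := hsub hr
    have hir := hi r hrT
    have hn : 0 ≤ᵐ[volume.restrict (Ioo 0 r)] fun s => (r - s) ^ (-α) * φ s := by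
      filter_upwards [ae_restrict_mem measurableSet_Ioo] with s hs
      have hp := h0 s ⟨hs.1, hs.2.le.trans hrT.2⟩
      have : 0 < r - s := by linarith [hs.2]
      simp only [Pi.zero_apply]
      positivity
    have hJ : ENNReal.ofReal (Real.exp (-(l * r)) * ∫ s in Ioc 0 r, (r - s) ^ (-α) * φ s)
        ≤ ∫⁻ s, k (r - s) * g s := by
      rw [ENNReal.ofReal_mul (by positivity), integral_Ioc_eq_integral_Ioo,
        ofReal_integral_eq_lintegral_ofReal (hir.mono_set Ioo_subset_Ioc_self) hn,
        ← lintegral_const_mul' _ _ ENNReal.ofReal_ne_top]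
      refine le_trans ?_ (setLIntegral_le_lintegral (Ioo 0 r) _)
      refine setLIntegral_mono' measurableSet_Ioo fun s hs => ?_
      have h1 : r - s ∈ Ioi (0:ℝ) := by simpa using hs.2
      have h2 : s ∈ Ioc 0 t := ⟨hs.1, hs.2.le.trans hr.2⟩
      have h3 : 0 < r - s := h1
      rw [hk, hg, indicator_of_mem h1, indicator_of_mem h2,
        ← ENNReal.ofReal_mul (by positivity), ← ENNReal.ofReal_mul (by positivity)]
      apply le_of_eq
      congr 1
      rw [show -(l * r) = -(l * (r - s)) + -(l * s) by ring, Real.exp_add]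
      ring
    have hJ0 : 0 ≤ ∫ s in Ioc 0 r, (r - s) ^ (-α) * φ s := by
      rw [integral_Ioc_eq_integral_Ioo]
      exact integral_nonneg_of_ae hn
    have hr0 : 0 < r := hr.1
    refine le_trans ?_ (add_le_add_right (mul_le_mul_right hJ _) _)
    rw [hg, indicator_of_mem hr, indicator_of_mem hr, ← ENNReal.ofReal_mul hb,
      ← ENNReal.ofReal_add (by positivity) (by positivity)]
    apply ENNReal.ofReal_le_ofReal
    have he : Real.exp (-(l * r)) ≤ 1 := by
      rw [Real.exp_le_one_iff]
      have := mul_pos hl hr0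
      linarith
    have hA : 0 ≤ a * r ^ (-(1:ℝ)/2) := by positivity
    calc Real.exp (-(l * r)) * φ r
        ≤ Real.exp (-(l * r)) * (a * r ^ (-(1:ℝ)/2)
          + b * ∫ s in Ioc 0 r, (r - s) ^ (-α) * φ s) := by gcongr; exact hφ r hrT
      _ = Real.exp (-(l * r)) * (a * r ^ (-(1:ℝ)/2))
          + b * (Real.exp (-(l * r)) * ∫ s in Ioc 0 r, (r - s) ^ (-α) * φ s) := by ring
      _ ≤ _ := add_le_add (mul_le_of_le_one_left hA he) le_rfl
  have htot := lintegral_mono (μ := volume) key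
  have hsm : Measurable
      ((Ioc 0 t).indicator (fun r => ENNReal.ofReal (a * r ^ (-(1:ℝ)/2)))) := by
    apply Measurable.indicator _ measurableSet_Ioc
    fun_prop
  have hs0 : 0 ≤ᵐ[volume.restrict (Ioc 0 t)] fun r => a * r ^ (-(1:ℝ)/2) := by
    filter_upwards [ae_restrict_mem measurableSet_Ioc] with r hr
    have : 0 < r := hr.1
    simp only [Pi.zero_apply]
    positivity
  rw [lintegral_add_left hsm, lintegral_const_mul' _ _ ENNReal.ofReal_ne_top,
    lintegral_convolution_kernel hkm hgm, ← mul_assoc, hgint, lintegral_indicator measurableSet_Ioc,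
    ← ofReal_integral_eq_lintegral_ofReal ((integrableOn_sing ht.1).const_mul a) hs0,
    integral_const_mul, integral_sing ht.1] at htot
  have ht0 : 0 < t := ht.1
  set Φ := ∫ s in Ioc 0 t, Real.exp (-(l * s)) * φ s with hΦ
  have hΦ0 : 0 ≤ Φ := integral_nonneg_of_ae hgn
  -- the memory term is at most `Φ / 2`, and `Φ` is finite, so it can be absorbed
  have h2 := htot.trans (add_le_add_right (mul_le_mul_left hlb _) _)
  rw [← ENNReal.ofReal_mul (by norm_num), ← ENNReal.ofReal_add (by positivity) (by positivity),
    ENNReal.ofReal_le_ofReal_iff (by positivity)] at h2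
  have h3 : ∫ s in Ioc 0 t, φ s ≤ Real.exp (l * T) * Φ := by
    rw [hΦ, ← integral_const_mul]
    refine setIntegral_mono_on hint (hgi.const_mul _) measurableSet_Ioc fun s hs => ?_
    rw [← mul_assoc, ← Real.exp_add]
    refine le_mul_of_one_le_left (h0 s (hsub hs)) (Real.one_le_exp ?_)
    have := mul_le_mul_of_nonneg_left (hsub hs).2 hl.le
    linarith
  calc _ ≤ _ := h3
    _ ≤ Real.exp (l * T) * (4 * a * t ^ ((1:ℝ)/2)) := by gcongr; linarith
    _ = _ := by ring

lemma integral_kernel_near {α t h : ℝ} (hα1 : α < 1) (hh : 0 ≤ h) :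
    IntegrableOn (fun s => (t - s) ^ (-α)) (Ioc (t - h) t) volume ∧
    ∫ s in Ioc (t - h) t, (t - s) ^ (-α) = h ^ (1 - α) / (1 - α) := by
  have hle : t - h ≤ t := by linarith
  constructor
  · rw [← intervalIntegrable_iff_integrableOn_Ioc_of_le hle]
    have := (intervalIntegral.intervalIntegrable_rpow' (a := h) (b := 0) (r := -α)
      (by linarith)).comp_sub_left t
    simpa using this
  · rw [← intervalIntegral.integral_of_le hle,
      intervalIntegral.integral_comp_sub_left (fun u => u ^ (-α)) t]
    simp only [sub_self, sub_sub_cancel]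
    rw [integral_rpow (by left; linarith), show -α + 1 = 1 - α by ring,
      Real.zero_rpow (by linarith)]
    ring

/-- Splitting the memory integral at distance `h` from its endpoint: far away the kernel is at most
`h ^ (-α)`, close by `φ` is at most `B` and the kernel has mass `h ^ (1-α) / (1-α)`. -/
lemma integral_split_le {α t h B : ℝ} {φ : ℝ → ℝ} (hα0 : 0 ≤ α) (hα1 : α < 1)
    (hh : 0 < h) (hht : h < t)
    (hc : ContinuousOn φ (Ioc 0 t)) (h0 : ∀ s ∈ Ioc 0 t, 0 ≤ φ s)
    (hi : IntegrableOn (fun s => (t - s) ^ (-α) * φ s) (Ioc 0 t) volume)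
    (hB : ∀ s ∈ Ioc (t - h) t, φ s ≤ B) :
    ∫ s in Ioc 0 t, (t - s) ^ (-α) * φ s
      ≤ h ^ (-α) * (∫ s in Ioc 0 t, φ s) + B * (h ^ (1 - α) / (1 - α)) := by
  have ht : 0 < t := hh.trans hht
  have hint := integrableOn_of_kernel hα0 ht hc h0 hi
  have hU : Ioc 0 t = Ioc 0 (t - h) ∪ Ioc (t - h) t :=
    (Ioc_union_Ioc_eq_Ioc (by linarith) (by linarith)).symm
  have hs1 : Ioc 0 (t - h) ⊆ Ioc 0 t := Ioc_subset_Ioc_right (by linarith)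
  have hs2 : Ioc (t - h) t ⊆ Ioc 0 t := Ioc_subset_Ioc_left (by linarith)
  obtain ⟨hk1, hk2⟩ := integral_kernel_near (t := t) hα1 hh.le
  have hsplit : ∫ s in Ioc 0 t, (t - s) ^ (-α) * φ s
      = (∫ s in Ioc 0 (t - h), (t - s) ^ (-α) * φ s)
        + ∫ s in Ioc (t - h) t, (t - s) ^ (-α) * φ s := by
    conv_lhs => rw [hU]
    exact setIntegral_union (Ioc_disjoint_Ioc_of_le le_rfl) measurableSet_Ioc
      (hi.mono_set hs1) (hi.mono_set hs2)
  rw [hsplit]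
  apply add_le_add
  · calc ∫ s in Ioc 0 (t - h), (t - s) ^ (-α) * φ s
        ≤ ∫ s in Ioc 0 (t - h), h ^ (-α) * φ s := by
          refine setIntegral_mono_on (hi.mono_set hs1) ((hint.mono_set hs1).const_mul _)
            measurableSet_Ioc fun s hs => ?_
          exact mul_le_mul_of_nonneg_right (Real.rpow_le_rpow_of_nonpos hh
            (by linarith [hs.2]) (by linarith)) (h0 s (hs1 hs))
      _ = h ^ (-α) * ∫ s in Ioc 0 (t - h), φ s := integral_const_mul _ _
      _ ≤ _ := by
          refine mul_le_mul_of_nonneg_left ?_ (by positivity)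
          refine setIntegral_mono_set hint ?_ hs1.eventuallyLE
          filter_upwards [ae_restrict_mem measurableSet_Ioc] with s hs using h0 s hs
  · rw [← hk2, ← integral_const_mul]
    refine setIntegral_mono_on (hi.mono_set hs2) (hk1.const_mul _) measurableSet_Ioc
      fun s hs => ?_
    rw [mul_comm]
    exact mul_le_mul_of_nonneg_right (hB s hs) (Real.rpow_nonneg (by linarith [hs.2]) _)

theorem singular_gronwall
    (α T : ℝ) (hα0 : 0 ≤ α) (hα1 : α < 1) (hT : 0 < T) (b : ℝ) (hb : 0 ≤ b) :
    ∃ C : ℝ, 0 < C ∧ ∀ (a : ℝ) (φ : ℝ → ℝ), 0 ≤ a →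
      ContinuousOn φ (Ioc 0 T) →
      (∀ t ∈ Ioc 0 T, 0 ≤ φ t) →
      (∀ t ∈ Ioc 0 T,
        IntegrableOn (fun s => (t - s) ^ (-α) * φ s) (Ioc 0 t) volume) →
      (∀ t ∈ Ioc 0 T,
        φ t ≤ a * t ^ (-(1:ℝ)/2) + b * ∫ s in Ioc 0 t, (t - s) ^ (-α) * φ s) →
      ∀ t ∈ Ioc 0 T, φ t ≤ C * a * t ^ (-(1:ℝ)/2) := by
  obtain ⟨K, hK, hL1⟩ := singular_gronwall_L1 α T hα0 hα1 b hb
  have hβ : 0 < 1 - α := by linarith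
  -- `θ` is small enough for the near part of the memory integral to be absorbed
  obtain ⟨θ, hθ0, hθ1, hθ⟩ : ∃ θ : ℝ, 0 < θ ∧ θ ≤ 1/2 ∧
      2 * b * ((θ * T) ^ (1 - α) / (1 - α)) ≤ 1/2 := by
    have hcont : ContinuousAt (fun θ : ℝ => 2 * b * ((θ * T) ^ (1 - α) / (1 - α))) 0 := by
      apply ContinuousAt.mul continuousAt_const
      apply ContinuousAt.div_const
      exact (by fun_prop : ContinuousAt (fun θ : ℝ => θ * T) 0).rpow_const (Or.inr hβ.le)
    have hlt : (fun θ : ℝ => 2 * b * ((θ * T) ^ (1 - α) / (1 - α))) 0 < 1/2 := by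
      simp [Real.zero_rpow hβ.ne']
    have h1 := (hcont.eventually_lt continuousAt_const hlt).filter_mono
      (nhdsWithin_le_nhds (s := Ioi 0))
    have h2 : ∀ᶠ θ : ℝ in nhdsWithin 0 (Ioi 0), θ ∈ Ioc (0:ℝ) (1/2) :=
      Ioc_mem_nhdsGT (by norm_num)
    obtain ⟨θ, h, h'⟩ := (h1.and h2).exists
    exact ⟨θ, h'.1, h'.2, h.le⟩
  refine ⟨4 * (2 + b * T ^ (1 - α) * θ ^ (-α) * K), by positivity,
    fun a φ ha hc h0 hi hφ t ht => ?_⟩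
  have ht0 : 0 < t := ht.1
  have hsubt : Icc (t/2) t ⊆ Ioc 0 T := fun s hs => ⟨by linarith [hs.1], hs.2.trans ht.2⟩
  obtain ⟨τ, hτ, hmax⟩ := isCompact_Icc.exists_isMaxOn (nonempty_Icc.2 (by linarith : t/2 ≤ t))
    (((continuous_id.sub continuous_const).continuousOn).mul (hc.mono hsubt) :
      ContinuousOn (fun s => (s - t/2) * φ s) (Icc (t/2) t))
  set M := (τ - t/2) * φ τ with hM
  have hmax' : ∀ s ∈ Icc (t/2) t, (s - t/2) * φ s ≤ M := fun s hs => hmax hs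
  have hM0 : 0 ≤ M := mul_nonneg (by linarith [hτ.1]) (h0 τ (hsubt hτ))
  have hMle : M ≤ 2 * a * t ^ ((1:ℝ)/2) * (2 + b * T ^ (1 - α) * θ ^ (-α) * K) := by
    rcases hτ.1.eq_or_lt with h | h
    · rw [hM, ← h, sub_self, zero_mul]; positivity
    have hτT := hsubt hτ
    have hτ0 : 0 < τ := hτT.1
    set d := τ - t/2 with hd
    have hd0 : 0 < d := by linarith
    have hdT : d ≤ T := by linarith [hτT.2]
    have hdt : d ≤ t := by linarith [hτ.2]
    have hθd : θ * d ≤ d / 2 := by nlinarith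
    have hsub : Ioc 0 τ ⊆ Ioc 0 T := Ioc_subset_Ioc_right hτT.2
    -- as `θ ≤ 1/2`, the weight is at least `d / 2` on the near part, so `φ ≤ 2 * M / d` there
    have hsp := integral_split_le (h := θ * d) (B := 2 * M / d) hα0 hα1 (by positivity)
      (by linarith) (hc.mono hsub) (fun s hs => h0 s (hsub hs)) (hi τ hτT) (by
        intro s hs
        have hs1 : t/2 + d/2 ≤ s := by linarith [hs.1]
        have hsI : s ∈ Icc (t/2) t := ⟨by linarith, hs.2.trans hτ.2⟩
        have h5 := hmax' s hsI
        have h6 := h0 s (hsubt hsI)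
        rw [le_div_iff₀ hd0]
        nlinarith)
    have hL := hL1 a φ ha hc h0 hi hφ τ hτT
    have hmain : M ≤ d * (a * τ ^ (-(1:ℝ)/2) + b * ((θ * d) ^ (-α) * (K * a * τ ^ ((1:ℝ)/2))
        + 2 * M / d * ((θ * d) ^ (1 - α) / (1 - α)))) := by
      rw [hM]
      refine mul_le_mul_of_nonneg_left ((hφ τ hτT).trans ?_) hd0.le
      gcongr
      refine hsp.trans ?_
      gcongr
    have e1 : d * τ ^ (-(1:ℝ)/2) ≤ 2 * t ^ ((1:ℝ)/2) := by
      have : d ≤ τ := by linarith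
      calc d * τ ^ (-(1:ℝ)/2) ≤ τ * τ ^ (-(1:ℝ)/2) := by gcongr
        _ = τ ^ ((1:ℝ)/2) := by
          nth_rewrite 1 [← Real.rpow_one τ]
          rw [← Real.rpow_add hτ0]; norm_num
        _ ≤ t ^ ((1:ℝ)/2) := Real.rpow_le_rpow hτ0.le hτ.2 (by norm_num)
        _ ≤ _ := by linarith [Real.rpow_nonneg ht0.le ((1:ℝ)/2)]
    have e2 : d * (θ * d) ^ (-α) * τ ^ ((1:ℝ)/2) ≤ T ^ (1 - α) * θ ^ (-α) * t ^ ((1:ℝ)/2) := by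
      have : d * (θ * d) ^ (-α) = d ^ (1 - α) * θ ^ (-α) := by
        rw [Real.mul_rpow hθ0.le hd0.le, sub_eq_add_neg, Real.rpow_add hd0, Real.rpow_one]
        ring
      rw [this]
      gcongr
      exact hτ.2
    have e3 : 2 * b * ((θ * d) ^ (1 - α) / (1 - α)) ≤ 1/2 := by
      refine le_trans ?_ hθ
      gcongr
    have hexp : d * (a * τ ^ (-(1:ℝ)/2) + b * ((θ * d) ^ (-α) * (K * a * τ ^ ((1:ℝ)/2))
        + 2 * M / d * ((θ * d) ^ (1 - α) / (1 - α))))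
        = a * (d * τ ^ (-(1:ℝ)/2)) + b * K * a * (d * (θ * d) ^ (-α) * τ ^ ((1:ℝ)/2))
          + M * (2 * b * ((θ * d) ^ (1 - α) / (1 - α))) := by
      have hq : d * (2 * M / d) = 2 * M := by field_simp
      linear_combination b * ((θ * d) ^ (1 - α) / (1 - α)) * hq
    rw [hexp] at hmain
    have f1 := mul_le_mul_of_nonneg_left e1 ha
    have f2 := mul_le_mul_of_nonneg_left e2 (by positivity : 0 ≤ b * K * a)
    have f3 := mul_le_mul_of_nonneg_left e3 hM0
    linarith
  have hfin := (hmax' t ⟨by linarith, le_rfl⟩).trans hMle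
  have hpow : t ^ ((1:ℝ)/2) = t * t ^ (-(1:ℝ)/2) := by
    nth_rewrite 2 [← Real.rpow_one t]
    rw [← Real.rpow_add ht0]; norm_num
  rw [hpow] at hfin
  refine le_of_mul_le_mul_left ?_ (by linarith : 0 < t/2)
  linarith
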